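/- Asynchronous subtyping is a congruence for choices: if J ⊆ I and T_i <:_Θ U_i for all i ∈ J, then ⊕_p{ℓ_i(b_i).T_i}_{i∈J} <:_Θ ⊕_p{ℓ_i(b_i).U_i}_{i∈I} (internal choices may drop branches on the smaller side) and &_p{ℓ_i(b_i).T_i}_{i∈I} <:_Θ &_p{ℓ_i(b_i).U_i}_{i∈J} (external choices may drop branches on the larger side). -/

import Mathlib

/-! ## Ground types, constants, messages, local actions -/

/-- Ground types of payload values. -/
inductive GTy : Type where
  | unit | bool | int
deriving DecidableEq

/-- Constant values. -/
inductive Const : Type where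
  | unit : Const
  | bool : Bool → Const
  | int : ℤ → Const
deriving DecidableEq

/-- Typing of constants: `v : b`. -/
inductive Const.HasTy : Const → GTy → Prop where
  | unit : Const.HasTy .unit .unit
  | bool (b : Bool) : Const.HasTy (.bool b) .bool
  | int (n : ℤ) : Const.HasTy (.int n) .int

/-- Labels are drawn from a fixed countable set. -/
abbrev Label := ℕ
/-- Participants. -/
abbrev PName := ℕ
/-- Session type variables. -/
abbrev TVar := ℕ
/-- A message is a label together with a constant payload. -/
abbrev Msg := Label × Const

/-- Local actions: internal, send a message to a participant, receive a message
from a participant. -/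
inductive LAct : Type where
  | tau : LAct
  | send (p : PName) (m : Msg) : LAct
  | recv (p : PName) (m : Msg) : LAct
deriving DecidableEq

/-! ## Multiparty session types

A choice `⊕_p{ℓᵢ(bᵢ).Tᵢ}_{i∈I}` (resp. `&_p{…}`) is represented by a participant `p`,
a partial assignment `dom : Label → Option GTy` of payload sorts to the labels in `I`
(so that `I = {ℓ | (dom ℓ).isSome}`, automatically with distinct labels), and a
continuation function `cont : Label → STy` (whose values outside `I` are irrelevant). -/

inductive STy : Type where
  | done : STy
  | send (p : PName) (dom : Label → Option GTy) (cont : Label → STy) : STy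
  | recv (p : PName) (dom : Label → Option GTy) (cont : Label → STy) : STy
  | var (X : TVar) : STy
  | mu (X : TVar) (T : STy) : STy

namespace STy

/-- Simultaneous (capture-ignoring, shadowing-respecting) substitution. -/
def subst (σ : TVar → Option STy) : STy → STy
  | .done => .done
  | .send p dom cont => .send p dom (fun ℓ => (cont ℓ).subst σ)
  | .recv p dom cont => .recv p dom (fun ℓ => (cont ℓ).subst σ)
  | .var X => (σ X).getD (.var X)
  | .mu X T => .mu X (T.subst (fun Y => if Y = X then none else σ Y))

/-- Substitution of a single variable. -/
def subst1 (X : TVar) (S : STy) (T : STy) : STy :=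
  T.subst (fun Y => if Y = X then some S else none)

/-- Single-step unfolding: `unf (μX.T) = (unf T)[X ↦ μX.T]`, identity otherwise. -/
def unf : STy → STy
  | .mu X T => (unf T).subst1 X (.mu X T)
  | T => T

/-- `X` occurs free in `T`. -/
inductive FreeIn (X : TVar) : STy → Prop where
  | send {p dom cont ℓ b} : dom ℓ = some b → FreeIn X (cont ℓ) →
      FreeIn X (.send p dom cont)
  | recv {p dom cont ℓ b} : dom ℓ = some b → FreeIn X (cont ℓ) →
      FreeIn X (.recv p dom cont)
  | var : FreeIn X (.var X)
  | mu {Y T} : Y ≠ X → FreeIn X T → FreeIn X (.mu Y T)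

/-- Every (free) occurrence of `X` in `T` lies inside a choice. -/
def GuardedIn (X : TVar) : STy → Prop
  | .done => True
  | .send _ _ _ => True
  | .recv _ _ _ => True
  | .var Y => Y ≠ X
  | .mu Y T => Y = X ∨ GuardedIn X T

/-- The label set of a choice is finite. -/
def FiniteDom (dom : Label → Option GTy) : Prop := {ℓ | (dom ℓ).isSome}.Finite

/-- The label set of a choice is nonempty. -/
def NonemptyDom (dom : Label → Option GTy) : Prop := ∃ ℓ, (dom ℓ).isSome

/-- Well-formed session types: choices are finite and nonempty, recursion is guarded. -/
inductive WF : STy → Prop where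
  | done : WF .done
  | send {p dom cont} : NonemptyDom dom → FiniteDom dom →
      (∀ ℓ b, dom ℓ = some b → WF (cont ℓ)) → WF (.send p dom cont)
  | recv {p dom cont} : NonemptyDom dom → FiniteDom dom →
      (∀ ℓ b, dom ℓ = some b → WF (cont ℓ)) → WF (.recv p dom cont)
  | var (X : TVar) : WF (.var X)
  | mu {X T} : GuardedIn X T → WF T → WF (.mu X T)

/-- `T` is a session type over the set `Θ` of type variables. -/
def Over (Θ : Set TVar) (T : STy) : Prop := WF T ∧ ∀ X, FreeIn X T → X ∈ Θ

/-- Closed session types. -/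
def Closed (T : STy) : Prop := Over ∅ T

end STy

/-! ## The inductive relations and predicates of Fig. 2 -/

/-- `U ↪!^{p,ℓ,b} U'`: an implementation of `U` may send a message `ℓ(v)` with
`v : b` to `p` and then follow `U'`. -/
inductive StepSend : STy → PName → Label → GTy → STy → Prop where
  | base {p dom cont ℓ b} : dom ℓ = some b →
      StepSend (.send p dom cont) p ℓ b (cont ℓ)
  | choice {p q dom cont dom' cont' ℓ b} : p ≠ q →
      STy.NonemptyDom dom' →
      (∀ ℓ' b', dom' ℓ' = some b' → dom ℓ' = some b') →
      (∀ ℓ' b', dom' ℓ' = some b' → StepSend (cont ℓ') p ℓ b (cont' ℓ')) →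
      StepSend (.send q dom cont) p ℓ b (.send q dom' cont')
  | branch {p q dom cont cont' ℓ b} :
      (∀ ℓ' b', dom ℓ' = some b' → StepSend (cont ℓ') p ℓ b (cont' ℓ')) →
      StepSend (.recv q dom cont) p ℓ b (.recv q dom cont')
  | mu {X T T' p ℓ b} :
      StepSend (T.subst1 X (.mu X T)) p ℓ b T' →
      StepSend (.mu X T) p ℓ b T'

/-- `T ↪?^{p,ℓ,b} T'`: an implementation of `T` is required to accept a message
`ℓ(v)` with `v : b` from `p`, and then follow `T'`. -/
inductive StepRecv : STy → PName → Label → GTy → STy → Prop where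
  | base {p dom cont ℓ b} : dom ℓ = some b →
      StepRecv (.recv p dom cont) p ℓ b (cont ℓ)
  | choice {p q dom cont dom' cont' ℓ b} : p ≠ q →
      STy.NonemptyDom dom' →
      (∀ ℓ' b', dom' ℓ' = some b' → dom ℓ' = some b') →
      (∀ ℓ' b', dom' ℓ' = some b' → StepRecv (cont ℓ') p ℓ b (cont' ℓ')) →
      StepRecv (.recv q dom cont) p ℓ b (.recv q dom' cont')
  | branch {p q dom cont cont' ℓ b} :
      (∀ ℓ' b', dom ℓ' = some b' → StepRecv (cont ℓ') p ℓ b (cont' ℓ')) →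
      StepRecv (.send q dom cont) p ℓ b (.send q dom cont')
  | mu {X T T' p ℓ b} :
      StepRecv (T.subst1 X (.mu X T)) p ℓ b T' →
      StepRecv (.mu X T) p ℓ b T'

/-- `Sends_p(T)`: an implementation of `T` is required to send a message to `p`,
without first waiting for any message. -/
inductive Sends (p : PName) : STy → Prop where
  | base {dom cont} : Sends p (.send p dom cont)
  | choice {q dom cont} : (∀ ℓ b, dom ℓ = some b → Sends p (cont ℓ)) →
      Sends p (.send q dom cont)
  | mu {X T} : Sends p T → Sends p (.mu X T)

/-- `Recvs_p(T)`: an implementation of `T` is permitted to wait for a message from `p`. -/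
inductive Recvs (p : PName) : STy → Prop where
  | base {dom cont} : Recvs p (.recv p dom cont)
  | choice {q dom cont} : (∀ ℓ b, dom ℓ = some b → Recvs p (cont ℓ)) →
      Recvs p (.recv q dom cont)
  | mu {X T} : Recvs p T → Recvs p (.mu X T)

/-! ## Asynchronous multiparty session subtyping (Definition 3.1) -/

/-- The closure conditions (1)–(5) of Definition 3.1 for a candidate relation `R`. -/
def SubClauses (Θ : Set TVar) (R : STy → STy → Prop) : Prop :=
  ∀ T U, R T U →
    (∀ p dom cont, T.unf = .send p dom cont →
      ∀ ℓ b, dom ℓ = some b → ∃ U', StepSend U p ℓ b U' ∧ R (cont ℓ) U') ∧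
    (∀ p dom cont, T.unf = .recv p dom cont → Recvs p U) ∧
    (∀ p dom cont, U.unf = .send p dom cont → Sends p T) ∧
    (∀ p dom cont, U.unf = .recv p dom cont →
      ∀ ℓ b, dom ℓ = some b → ∃ T', StepRecv T p ℓ b T' ∧ R T' (cont ℓ)) ∧
    (∀ X ∈ Θ, (T.unf = .var X ↔ U.unf = .var X))

/-- Asynchronous subtyping `T <:_Θ U`: the largest relation satisfying the clauses,
i.e. the union of all such relations. -/
def ASub (Θ : Set TVar) (T U : STy) : Prop :=
  ∃ R, SubClauses Θ R ∧ R T U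

/-- The clauses of `SubClauses` at a single pair. -/
def ClausesAt (Θ : Set TVar) (R : STy → STy → Prop) (T U : STy) : Prop :=
    (∀ p dom cont, T.unf = .send p dom cont →
      ∀ ℓ b, dom ℓ = some b → ∃ U', StepSend U p ℓ b U' ∧ R (cont ℓ) U') ∧
    (∀ p dom cont, T.unf = .recv p dom cont → Recvs p U) ∧
    (∀ p dom cont, U.unf = .send p dom cont → Sends p T) ∧
    (∀ p dom cont, U.unf = .recv p dom cont →
      ∀ ℓ b, dom ℓ = some b → ∃ T', StepRecv T p ℓ b T' ∧ R T' (cont ℓ)) ∧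
    (∀ X ∈ Θ, (T.unf = .var X ↔ U.unf = .var X))

theorem ClausesAt.mono {Θ : Set TVar} {R S : STy → STy → Prop} {T U : STy}
    (hRS : ∀ A B, R A B → S A B) (h : ClausesAt Θ R T U) : ClausesAt Θ S T U := by
  obtain ⟨h1, h2, h3, h4, h5⟩ := h
  refine ⟨?_, h2, h3, ?_, h5⟩
  · intro p d c e ℓ b hb
    obtain ⟨V, hV, hR⟩ := h1 p d c e ℓ b hb
    exact ⟨V, hV, hRS _ _ hR⟩
  · intro p d c e ℓ b hb
    obtain ⟨V, hV, hR⟩ := h4 p d c e ℓ b hb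
    exact ⟨V, hV, hRS _ _ hR⟩

/-- One-step coinduction: the clauses into `ASub` imply `ASub`. -/
theorem asub_of_clauses {Θ : Set TVar} {T U : STy} (h : ClausesAt Θ (ASub Θ) T U) :
    ASub Θ T U := by
  refine ⟨fun A B => ASub Θ A B ∨ (A = T ∧ B = U), ?_, Or.inr ⟨rfl, rfl⟩⟩
  intro A B hAB
  change ClausesAt Θ (fun A B => ASub Θ A B ∨ (A = T ∧ B = U)) A B
  rcases hAB with ⟨R, hR, hAB⟩ | ⟨rfl, rfl⟩
  · exact ClausesAt.mono (R := R) (fun _ _ hr => Or.inl ⟨R, hR, hr⟩) (hR A B hAB)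
  · exact ClausesAt.mono (fun _ _ hr => Or.inl hr) h

/-- Asynchronous subtyping is a congruence for choices: if `J ⊆ I` and
`T_i <:_Θ U_i` for all `i ∈ J`, then `⊕_p{ℓᵢ(bᵢ).Tᵢ}_{i∈J} <:_Θ ⊕_p{ℓᵢ(bᵢ).Uᵢ}_{i∈I}`
(internal choices may drop branches on the smaller side) and
`&_p{ℓᵢ(bᵢ).Tᵢ}_{i∈I} <:_Θ &_p{ℓᵢ(bᵢ).Uᵢ}_{i∈J}` (external choices may drop branches on
the larger side).  Here the index set `I` of a choice is represented by the domain of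
`dom : Label → Option GTy` (which also records the payload sorts `bᵢ`), and the subset
`J ⊆ I` by the domain of `domJ`. -/
theorem sub_choice_congr (Θ : Finset TVar) (p : PName)
    (dom domJ : Label → Option GTy) (contT contU : Label → STy)
    (hJI : ∀ ℓ b, domJ ℓ = some b → dom ℓ = some b)
    (hsub : ∀ ℓ b, domJ ℓ = some b → ASub (↑Θ) (contT ℓ) (contU ℓ)) :
    (STy.Over (↑Θ) (.send p domJ contT) → STy.Over (↑Θ) (.send p dom contU) →
      ASub (↑Θ) (.send p domJ contT) (.send p dom contU)) ∧
    (STy.Over (↑Θ) (.recv p dom contT) → STy.Over (↑Θ) (.recv p domJ contU) →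
      ASub (↑Θ) (.recv p dom contT) (.recv p domJ contU)) := by
  constructor
  · intro _ _
    refine asub_of_clauses (T := .send p domJ contT) (U := .send p dom contU)
      ⟨?_, ?_, ?_, ?_, ?_⟩
    · intro q d c h ℓ b hb
      simp only [STy.unf, STy.send.injEq] at h
      obtain ⟨rfl, rfl, rfl⟩ := h
      exact ⟨_, StepSend.base (hJI _ _ hb), hsub _ _ hb⟩
    · intro q d c h
      simp [STy.unf] at h
    · intro q d c h
      simp only [STy.unf, STy.send.injEq] at h
      obtain ⟨rfl, rfl, rfl⟩ := h
      exact Sends.base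
    · intro q d c h
      simp [STy.unf] at h
    · intro X _
      simp [STy.unf]
  · intro _ _
    refine asub_of_clauses (T := .recv p dom contT) (U := .recv p domJ contU)
      ⟨?_, ?_, ?_, ?_, ?_⟩
    · intro q d c h
      simp [STy.unf] at h
    · intro q d c h
      simp only [STy.unf, STy.recv.injEq] at h
      obtain ⟨rfl, rfl, rfl⟩ := h
      exact Recvs.base
    · intro q d c h
      simp [STy.unf] at h
    · intro q d c h ℓ b hb
      simp only [STy.unf, STy.recv.injEq] at h
      obtain ⟨rfl, rfl, rfl⟩ := h
      exact ⟨_, StepRecv.base (hJI _ _ hb), hsub _ _ hb⟩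
    · intro X _
      simp [STy.unf]
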